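/- arXiv:1807.11837 — 2 statements merged into one kernel-verified Lean document; each statement's English description precedes it below -/
import Mathlib

section
/- For every t with a+1 ≤ t ≤ b, the row sum of the left-focal Green's function satisfies ∑_{s=a+2}^{b} G_l(t, s) ≤ (b − a − 1)(b − a + α − 2)/(α(α − 1)), and equality holds at t = a+1. -/
/-- Rising factorial `rf x r = Γ(x+r)/Γ(x)`, with the convention `rf 0 r = 0`. -/
noncomputable def rf (x r : ℝ) : ℝ := if x = 0 then 0 else Real.Gamma (x + r) / Real.Gamma x

/-- The left-focal Green's function. -/
noncomputable def Gl (a b : ℤ) (α : ℝ) (t s : ℤ) : ℝ :=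
  if t ≤ s - 1 then
    (1 / Real.Gamma α) *
      (rf (b - s + 1 : ℝ) (α - 1) * rf (t - a : ℝ) (α - 2) / rf (b - a : ℝ) (α - 2))
  else
    (1 / Real.Gamma α) *
      (rf (b - s + 1 : ℝ) (α - 1) * rf (t - a : ℝ) (α - 2) / rf (b - a : ℝ) (α - 2) -
        rf (t - s + 1 : ℝ) (α - 1))

/-!
The rising factorial satisfies the power rule `∑_{k=1}^n rf(k, r) = rf(n, r+1)/(r+1)`, because
`rf(x, r+1)` is a discrete antiderivative of `rf(x+1, r)`. Applied to both terms of the Green's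
function it evaluates the row sum exactly: with `C = (b-a-1)(b-a+α-2)/(α(α-1))`,
`∑_s G_l(t,s) = C · rf(t-a, α-2)/rf(1, α-2) - rf(t-a-1, α)/Γ(α+1)`.
The subtracted term is nonnegative, and `rf(n, α-2)` is nonincreasing in `n ≥ 1` as `α ≤ 2`; at
`t = a + 1` the quotient is `1` and the subtracted term vanishes by the convention `rf(0, α) = 0`.
-/

section RisingFactorial

variable {x r : ℝ}

lemma rf_zero_left (r : ℝ) : rf 0 r = 0 := if_pos rfl

lemma rf_of_ne_zero (hx : x ≠ 0) (r : ℝ) : rf x r = Real.Gamma (x + r) / Real.Gamma x := if_neg hx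

lemma rf_one_left (r : ℝ) : rf 1 r = Real.Gamma (1 + r) := by
  rw [rf_of_ne_zero one_ne_zero, Real.Gamma_one, div_one]

lemma rf_pos (hx : 0 < x) (hxr : 0 < x + r) : 0 < rf x r := by
  rw [rf_of_ne_zero hx.ne']
  exact div_pos (Real.Gamma_pos_of_pos hxr) (Real.Gamma_pos_of_pos hx)

lemma rf_nonneg (hx : 0 ≤ x) (hxr : 0 < x + r) : 0 ≤ rf x r := by
  rcases hx.eq_or_lt with rfl | hx
  · exact (rf_zero_left r).ge
  · exact (rf_pos hx hxr).le

lemma rf_add_one_right (hxr : x + r ≠ 0) : rf x (r + 1) = (x + r) * rf x r := by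
  rcases eq_or_ne x 0 with rfl | hx
  · simp only [rf_zero_left, mul_zero]
  · rw [rf_of_ne_zero hx, rf_of_ne_zero hx, ← add_assoc, Real.Gamma_add_one hxr, mul_div_assoc]

lemma rf_add_one_right_eq_mul_rf_add_one_left (hx : 0 ≤ x) (r : ℝ) :
    rf x (r + 1) = x * rf (x + 1) r := by
  rcases hx.eq_or_lt with rfl | hx
  · rw [rf_zero_left, zero_mul]
  · have hΓ : Real.Gamma x ≠ 0 := (Real.Gamma_pos_of_pos hx).ne'
    rw [rf_of_ne_zero hx.ne', rf_of_ne_zero (by positivity), Real.Gamma_add_one hx.ne',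
      add_right_comm x 1 r, add_assoc x r 1]
    field_simp

lemma rf_add_one_left_sub_rf (hx : 0 ≤ x) (hxr : x + 1 + r ≠ 0) :
    rf (x + 1) (r + 1) - rf x (r + 1) = (r + 1) * rf (x + 1) r := by
  rw [rf_add_one_right hxr, rf_add_one_right_eq_mul_rf_add_one_left hx]
  ring

lemma rf_add_two_right (hx : 0 ≤ x) (hxr : x + 1 + r ≠ 0) :
    rf x (r + 2) = x * (x + 1 + r) * rf (x + 1) r := by
  rw [show r + 2 = r + 1 + 1 by ring, rf_add_one_right_eq_mul_rf_add_one_left hx,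
    rf_add_one_right hxr, mul_assoc]

lemma rf_add_one_left_le (hx : 0 < x) (hxr : 0 < x + r) (hr : r ≤ 0) : rf (x + 1) r ≤ rf x r := by
  refine le_of_mul_le_mul_left ?_ hx
  calc x * rf (x + 1) r
    _ = (x + r) * rf x r := by
      rw [← rf_add_one_right_eq_mul_rf_add_one_left hx.le, rf_add_one_right hxr.ne']
    _ ≤ x * rf x r := mul_le_mul_of_nonneg_right (by linarith) (rf_pos hx hxr).le

lemma rf_add_natCast_left_le (hx : 0 < x) (hxr : 0 < x + r) (hr : r ≤ 0) (n : ℕ) :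
    rf (x + n) r ≤ rf x r := by
  induction n with
  | zero => rw [Nat.cast_zero, add_zero]
  | succ n ih =>
    rw [Nat.cast_succ, ← add_assoc]
    exact (rf_add_one_left_le (by positivity) (by linarith [n.cast_nonneg (α := ℝ)]) hr).trans ih

lemma sum_Icc_rf (hr : -1 < r) {c t : ℤ} (hct : c ≤ t + 1) :
    ∑ s ∈ Finset.Icc c t, rf (t - s + 1 : ℝ) r = rf (t - c + 1 : ℝ) (r + 1) / (r + 1) := by
  induction c, hct using Int.leInductionDown with
  | base => simp [rf_zero_left]
  | pred c hct ih =>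
    have hct' : (0 : ℝ) ≤ t - c + 1 := by exact_mod_cast (by omega : 0 ≤ t - c + 1)
    have hIcc : Finset.Icc (c - 1) t = insert (c - 1) (Finset.Icc c t) := by
      ext s
      simp only [Finset.mem_Icc, Finset.mem_insert]
      omega
    have hcast : (t - (c - 1 : ℤ) + 1 : ℝ) = t - c + 1 + 1 := by push_cast; ring
    have hr' : r + 1 ≠ 0 := by linarith
    rw [hIcc, Finset.sum_insert (by simp), ih, hcast, eq_div_iff hr', add_mul,
      div_mul_cancel₀ _ hr']
    linarith [rf_add_one_left_sub_rf (r := r) hct' (by linarith)]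

end RisingFactorial

section RowSum

variable {a b t : ℤ} {α : ℝ}

lemma Gl_eq_sub_ite (a b : ℤ) (α : ℝ) (t s : ℤ) :
    Gl a b α t s = (1 / Real.Gamma α) *
      (rf (b - s + 1 : ℝ) (α - 1) * (rf (t - a : ℝ) (α - 2) / rf (b - a : ℝ) (α - 2)) -
        if s ≤ t then rf (t - s + 1 : ℝ) (α - 1) else 0) := by
  unfold Gl
  by_cases hst : s ≤ t
  · rw [if_neg (by omega), if_pos hst, mul_div_assoc]
  · rw [if_pos (by omega), if_neg hst, sub_zero, mul_div_assoc]

lemma sum_Icc_rf_sub_one (hα : 0 < α) (hat : a + 1 ≤ t) :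
    ∑ s ∈ Finset.Icc (a + 2) t, rf (t - s + 1 : ℝ) (α - 1) = rf (t - a - 1 : ℝ) α / α := by
  rw [sum_Icc_rf (by linarith) (by omega), sub_add_cancel]
  congr 2
  push_cast
  ring

lemma sum_Gl_eq_rf (hα : 0 < α) (hat : a + 1 ≤ t) (htb : t ≤ b) :
    ∑ s ∈ Finset.Icc (a + 2) b, Gl a b α t s = (1 / Real.Gamma α) *
      (rf (b - a - 1 : ℝ) α / α * (rf (t - a : ℝ) (α - 2) / rf (b - a : ℝ) (α - 2)) -
        rf (t - a - 1 : ℝ) α / α) := by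
  have hfilter : (Finset.Icc (a + 2) b).filter (· ≤ t) = Finset.Icc (a + 2) t := by
    ext s
    simp only [Finset.mem_filter, Finset.mem_Icc]
    omega
  simp only [Gl_eq_sub_ite]
  rw [← Finset.mul_sum, Finset.sum_sub_distrib, ← Finset.sum_mul, ← Finset.sum_filter, hfilter,
    sum_Icc_rf_sub_one hα hat, sum_Icc_rf_sub_one hα (hat.trans htb)]

lemma sum_Gl (hα : 1 < α) (hat : a + 1 ≤ t) (htb : t ≤ b) :
    ∑ s ∈ Finset.Icc (a + 2) b, Gl a b α t s =
      (b - a - 1 : ℝ) * ((b - a : ℝ) + α - 2) / (α * (α - 1)) *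
        (rf (t - a : ℝ) (α - 2) / rf 1 (α - 2)) - rf (t - a - 1 : ℝ) α / Real.Gamma (α + 1) := by
  have hab : (0 : ℝ) ≤ b - a - 1 := by exact_mod_cast (by omega : 0 ≤ b - a - 1)
  have hα0 : α ≠ 0 := by linarith
  have hα1 : α - 1 ≠ 0 := by linarith
  have hrf_ba : rf (b - a : ℝ) (α - 2) ≠ 0 := (rf_pos (by linarith) (by linarith)).ne'
  have hrf_one : rf 1 (α - 2) ≠ 0 := (rf_pos one_pos (by linarith)).ne'
  have hΓ : Real.Gamma α = (α - 1) * rf 1 (α - 2) := by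
    rw [rf_one_left, show 1 + (α - 2) = α - 1 by ring, ← Real.Gamma_add_one hα1, sub_add_cancel]
  have hratio : rf (b - a - 1 : ℝ) α =
      (b - a - 1) * ((b - a : ℝ) + α - 2) * rf (b - a : ℝ) (α - 2) := by
    have h := rf_add_two_right (r := α - 2) hab (by linarith)
    rwa [sub_add_cancel, sub_add_cancel, ← add_sub_assoc] at h
  rw [sum_Gl_eq_rf (by linarith) hat htb, hratio, Real.Gamma_add_one hα0, hΓ]
  field_simp

end RowSum

theorem left_focal_green_row_sum_bound_general (a b : ℤ) (hab : a < b) (α : ℝ) (hα : 1 < α) :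
    (α ≤ 2 → ∀ t : ℤ, a + 1 ≤ t → t ≤ b →
      ∑ s ∈ Finset.Icc (a + 2) b, Gl a b α t s ≤
        (b - a - 1 : ℝ) * ((b - a : ℝ) + α - 2) / (α * (α - 1))) ∧
    ∑ s ∈ Finset.Icc (a + 2) b, Gl a b α (a + 1) s =
      (b - a - 1 : ℝ) * ((b - a : ℝ) + α - 2) / (α * (α - 1)) := by
  have hrf_one : 0 < rf 1 (α - 2) := rf_pos one_pos (by linarith)
  constructor
  · intro hα2 t hat htb
    obtain ⟨n, rfl⟩ := Int.le.dest hat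
    have hab' : (1 : ℝ) ≤ b - a := by exact_mod_cast (by omega : 1 ≤ b - a)
    have hbound : 0 ≤ (b - a - 1 : ℝ) * ((b - a : ℝ) + α - 2) / (α * (α - 1)) :=
      div_nonneg (mul_nonneg (by linarith) (by linarith)) (mul_nonneg (by linarith) (by linarith))
    have hcast : ((a + 1 + n : ℤ) - a : ℝ) = 1 + n := by push_cast; ring
    have hquot : rf (1 + n) (α - 2) / rf 1 (α - 2) ≤ 1 :=
      (div_le_one hrf_one).2 (rf_add_natCast_left_le one_pos (by linarith) (by linarith) n)
    have hsub : 0 ≤ rf (n : ℝ) α / Real.Gamma (α + 1) :=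
      div_nonneg (rf_nonneg n.cast_nonneg (by positivity))
        (Real.Gamma_nonneg_of_nonneg (by linarith))
    rw [sum_Gl hα hat htb, hcast, add_sub_cancel_left]
    exact (sub_le_self _ hsub).trans (mul_le_of_le_one_right hbound hquot)
  · have hcast : ((a + 1 : ℤ) - a : ℝ) = 1 := by push_cast; ring
    rw [sum_Gl hα le_rfl hab, hcast, div_self hrf_one.ne', sub_self, rf_zero_left, zero_div,
      mul_one, sub_zero]

theorem left_focal_green_row_sum_bound (a b : ℤ) (hab : 2 ≤ b - a) (α : ℝ)
    (hα1 : 1 < α) (hα2 : α < 2) :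
    (∀ t : ℤ, a + 1 ≤ t → t ≤ b →
      ∑ s ∈ Finset.Icc (a + 2) b, Gl a b α t s ≤
        (b - a - 1 : ℝ) * ((b - a : ℝ) + α - 2) / (α * (α - 1))) ∧
    ∑ s ∈ Finset.Icc (a + 2) b, Gl a b α (a + 1) s =
      (b - a - 1 : ℝ) * ((b - a : ℝ) + α - 2) / (α * (α - 1)) :=
  (left_focal_green_row_sum_bound_general a b (by omega) α hα1).imp_left fun h => h hα2.le
end

section
/- For every t with a+1 ≤ t ≤ b, the row sum of the right-focal Green's function has the closed form ∑_{s=a+2}^{b} G_r(t, s) = (b − a − 1)·rf(t−a−1, α−1)/Γ(α) − rf(t−a−1, α)/Γ(α+1). -/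
/-- The right-focal Green's function. -/
noncomputable def Gr (a : ℤ) (α : ℝ) (t s : ℤ) : ℝ :=
  if t ≤ s - 1 then
    (1 / Real.Gamma α) * rf (t - a - 1 : ℝ) (α - 1)
  else
    (1 / Real.Gamma α) * (rf (t - a - 1 : ℝ) (α - 1) - rf (t - s + 1 : ℝ) (α - 1))

/-!
Since `1 / Γ` vanishes at the nonpositive integers, `rf n r = 0` there, so the second branch of the
Green's function already contains the first: `Γ(α) G_r(t, s)` is `rf (t - a - 1) (α - 1)` minus
`rf (t - s + 1) (α - 1)` for every `s`. The first term is constant in `s`. The second telescopes,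
because the unit difference of `rf · α` is `α * rf · (α - 1)`, and the upper end `rf (t - b) α` of
the telescoping sum is zero as `t ≤ b`.
-/

open Finset Real

theorem sum_Ico_int_sub_add_one {M : Type*} [AddCommGroup M] (f : ℤ → M) {m n : ℤ} (hmn : m ≤ n) :
    ∑ i ∈ Ico m n, (f i - f (i + 1)) = f m - f n := by
  induction n, hmn using Int.leInduction with
  | base => simp
  | succ n hmn ih =>
    rw [← sum_Ico_add_eq_sum_Ico_add_one hmn, ih, sub_add_sub_cancel]

-- Mathlib's `Gamma 0 = 0` makes the convention at `x = 0` automatic.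
theorem rf_eq_Gamma_div_Gamma (x r : ℝ) : rf x r = Gamma (x + r) / Gamma x := by
  unfold rf
  split_ifs with hx
  · rw [hx, Gamma_zero, div_zero]
  · rfl

theorem rf_intCast_of_nonpos {n : ℤ} (hn : n ≤ 0) (r : ℝ) : rf n r = 0 := by
  obtain ⟨k, rfl⟩ := Int.exists_eq_neg_ofNat hn
  rw [rf_eq_Gamma_div_Gamma, Int.cast_neg, Int.cast_natCast, Gamma_neg_nat_eq_zero, div_zero]

theorem rf_add_one_sub_rf {x r : ℝ} (hxr : x + r ≠ 0) :
    rf (x + 1) r - rf x r = r * rf (x + 1) (r - 1) := by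
  have shift_add_one : x + 1 + r = x + r + 1 := by ring
  have shift_sub_one : x + 1 + (r - 1) = x + r := by ring
  simp only [rf_eq_Gamma_div_Gamma, shift_add_one, shift_sub_one, Gamma_add_one hxr]
  rcases eq_or_ne x 0 with rfl | hx
  · simp
  · rw [Gamma_add_one hx]
    field_simp
    ring

theorem rf_intCast_add_one_sub_rf {r : ℝ} (hr : ∀ k : ℕ, r ≠ -k) (n : ℤ) :
    rf (n + 1) r - rf n r = r * rf (n + 1) (r - 1) := by
  rcases lt_or_ge n 0 with hn | hn
  · have rf_succ_eq_zero (q : ℝ) : rf (n + 1) q = 0 := by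
      exact_mod_cast rf_intCast_of_nonpos (Int.add_one_le_of_lt hn) q
    rw [rf_succ_eq_zero, rf_succ_eq_zero, rf_intCast_of_nonpos hn.le, sub_zero, mul_zero]
  · lift n to ℕ using hn
    exact rf_add_one_sub_rf fun h => hr n (eq_neg_of_add_eq_zero_right h)

theorem mul_sum_Icc_rf {r : ℝ} (hr : ∀ k : ℕ, r ≠ -k) (t : ℤ) {m n : ℤ} (hmn : m ≤ n + 1) :
    r * ∑ s ∈ Icc m n, rf (t - s + 1) (r - 1) = rf (t - m + 1) r - rf (t - n) r := by
  have difference (s : ℤ) :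
      r * rf (t - s + 1) (r - 1) = rf (t - s + 1) r - rf (t - (s + 1 : ℤ) + 1) r := by
    have h := rf_intCast_add_one_sub_rf hr (t - s)
    push_cast at h ⊢
    rw [← h, sub_add_eq_sub_sub, sub_add_cancel]
  have telescoped := sum_Ico_int_sub_add_one (fun s : ℤ => rf (t - s + 1) r) hmn
  rw [mul_sum, sum_congr rfl fun s _ => difference s, ← Ico_add_one_right_eq_Icc, telescoped]
  push_cast
  rw [sub_add_eq_sub_sub, sub_add_cancel]

theorem Gr_eq_rf_sub_rf_div_Gamma (a : ℤ) (α : ℝ) (t s : ℤ) :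
    Gr a α t s = (rf (t - a - 1) (α - 1) - rf (t - s + 1) (α - 1)) / Gamma α := by
  unfold Gr
  split_ifs with hts
  · have rf_eq_zero : rf (t - s + 1) (α - 1) = 0 := by
      exact_mod_cast rf_intCast_of_nonpos (show t - s + 1 ≤ 0 by lia) (α - 1)
    rw [rf_eq_zero, sub_zero, one_div_mul_eq_div]
  · rw [one_div_mul_eq_div]

theorem right_focal_green_row_sum_general {a b t : ℤ} {α : ℝ} (hα : ∀ k : ℕ, α ≠ -k)
    (hat : a + 1 ≤ t) (htb : t ≤ b) :
    ∑ s ∈ Icc (a + 2) b, Gr a α t s =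
      (b - a - 1 : ℝ) * rf (t - a - 1) (α - 1) / Gamma α - rf (t - a - 1) α / Gamma (α + 1) := by
  have hα0 : α ≠ 0 := by simpa using hα 0
  have card_eq : (#(Icc (a + 2) b) : ℝ) = b - a - 1 := by
    have h := Int.card_Icc_of_le (a + 2) b (by lia)
    rw [← Int.cast_natCast, h]
    push_cast
    ring
  have telescoped : α * ∑ s ∈ Icc (a + 2) b, rf (t - s + 1) (α - 1) = rf (t - a - 1) α := by
    have upper_end : rf (t - b) α = 0 := by
      exact_mod_cast rf_intCast_of_nonpos (sub_nonpos.mpr htb) α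
    have lower_end : (t : ℝ) - (a + 2 : ℤ) + 1 = t - a - 1 := by push_cast; ring
    rw [mul_sum_Icc_rf hα t (by lia), upper_end, sub_zero, lower_end]
  simp only [Gr_eq_rf_sub_rf_div_Gamma]
  rw [← sum_div, sum_sub_distrib, sum_const, nsmul_eq_mul, card_eq, ← telescoped,
    Gamma_add_one hα0, mul_div_mul_left _ _ hα0, sub_div]

theorem right_focal_green_row_sum (a b : ℤ) (hab : 2 ≤ b - a) (α : ℝ)
    (hα1 : 1 < α) (hα2 : α < 2) :
    ∀ t : ℤ, a + 1 ≤ t → t ≤ b →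
      ∑ s ∈ Finset.Icc (a + 2) b, Gr a α t s =
        (b - a - 1 : ℝ) * rf (t - a - 1 : ℝ) (α - 1) / Real.Gamma α -
          rf (t - a - 1 : ℝ) α / Real.Gamma (α + 1) := by
  intro t hat htb
  exact right_focal_green_row_sum_general (fun k => by linarith [k.cast_nonneg (α := ℝ)]) hat htb
end
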